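/- Let 0 ≠ μ ∈ V_n be a symmetric Leibniz algebra structure on ℂ^n with M_μ = c·I + D for some c ∈ ℝ and some D ∈ Der(μ). Then for every A ∈ ker D, the adjoints (L^μ_A)* and (R^μ_A)* of the left and right multiplication operators are derivations of μ. -/

import Mathlib

/-!
Write `A.μ` for the infinitesimal action of `End(ℂⁿ)` on bilinear maps and `⟪μ, ν⟫` for the
Hermitian pairing `∑ᵢⱼ ⟪μ(eᵢ,eⱼ), ν(eᵢ,eⱼ)⟫`. Three facts carry the proof: the action is a Lie algebra
representation (`act_commutator`), the adjoint of `A.` is `A*.` (`pairing_act`), and `M_μ` is a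
moment map, `tr (M_μ A) = 2 ⟪μ, A.μ⟫` (`trace_Mmap_comp`).

Let `T` be a derivation of `μ` commuting with `D`. Since `M_μ = c·I + D`, cyclicity of the trace gives
`tr (M_μ [T, T*]) = tr ([D, T] T*) = 0`. On the other hand `T.μ = 0` gives
`tr (M_μ [T, T*]) = 2 ⟪μ, T.(T*.μ)⟫ = 2 ‖T*.μ‖²`. Hence `T*.μ = 0`, i.e. `T*` is a derivation.

In a symmetric Leibniz algebra all `L_A` and `R_A` are derivations, and `[D, L_A] = L_{DA}`,
`[D, R_A] = R_{DA}` vanish for `A ∈ ker D`, so the previous paragraph applies to both.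
-/

open scoped InnerProductSpace ComplexOrder
open LinearMap

noncomputable section

abbrev E (n : ℕ) := EuclideanSpace ℂ (Fin n)

abbrev Vb (n : ℕ) := E n →ₗ[ℂ] E n →ₗ[ℂ] E n

def e (n : ℕ) (i : Fin n) : E n := EuclideanSpace.single i 1

def Lop {n : ℕ} (μ : Vb n) (X : E n) : E n →ₗ[ℂ] E n := μ X

def Rop {n : ℕ} (μ : Vb n) (X : E n) : E n →ₗ[ℂ] E n := μ.flip X

def Mmap {n : ℕ} (μ : Vb n) : E n →ₗ[ℂ] E n :=
  (2 : ℂ) • ∑ i, Lop μ (e n i) ∘ₗ adjoint (Lop μ (e n i))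
  - (2 : ℂ) • ∑ i, adjoint (Lop μ (e n i)) ∘ₗ Lop μ (e n i)
  - (2 : ℂ) • ∑ i, adjoint (Rop μ (e n i)) ∘ₗ Rop μ (e n i)

/-- `A` is a derivation of `μ`. -/
def IsDer {n : ℕ} (μ : Vb n) (A : E n →ₗ[ℂ] E n) : Prop :=
  ∀ X Y, A (μ X Y) = μ (A X) Y + μ X (A Y)

def normSq {n : ℕ} (μ : Vb n) : ℝ :=
  ∑ i, ∑ j, ∑ k, ‖(⟪e n k, μ (e n i) (e n j)⟫_ℂ : ℂ)‖ ^ 2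

/-- `μ` is a left Leibniz algebra structure. -/
def IsLeftLeibniz {n : ℕ} (μ : Vb n) : Prop :=
  ∀ x y z : E n, μ x (μ y z) = μ (μ x y) z + μ y (μ x z)

/-- `μ` is a symmetric Leibniz algebra structure. -/
def IsSymLeibniz {n : ℕ} (μ : Vb n) : Prop :=
  IsLeftLeibniz μ ∧ ∀ x y z : E n, μ (μ x y) z = μ (μ x z) y + μ x (μ y z)

/-- The infinitesimal action `(A.μ)(X, Y) = A μ(X, Y) - μ(A X, Y) - μ(X, A Y)`. -/
def act {n : ℕ} (A : E n →ₗ[ℂ] E n) (μ : Vb n) : Vb n :=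
  μ.compr₂ A - μ ∘ₗ A - μ.compl₂ A

lemma act_apply {n : ℕ} (A : E n →ₗ[ℂ] E n) (μ : Vb n) (X Y : E n) :
    act A μ X Y = A (μ X Y) - μ (A X) Y - μ X (A Y) := rfl

lemma isDer_iff_act {n : ℕ} (A : E n →ₗ[ℂ] E n) (μ : Vb n) :
    IsDer μ A ↔ act A μ = 0 := by
  constructor
  · intro h
    refine LinearMap.ext fun X => LinearMap.ext fun Y => ?_
    rw [act_apply, h X Y]
    simp
  · intro h X Y
    have h1 : act A μ X Y = 0 := by rw [h]; rfl
    rw [act_apply, sub_sub, sub_eq_zero] at h1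
    exact h1

lemma act_commutator {n : ℕ} (S T : E n →ₗ[ℂ] E n) (μ : Vb n) :
    act (S ∘ₗ T - T ∘ₗ S) μ = act S (act T μ) - act T (act S μ) := by
  refine LinearMap.ext fun X => LinearMap.ext fun Y => ?_
  simp only [act_apply, LinearMap.sub_apply, LinearMap.comp_apply, map_sub]
  abel

/-- The Hermitian pairing on bilinear maps, conjugate-linear in the first argument. -/
def pairing {n : ℕ} (μ ν : Vb n) : ℂ :=
  ∑ i, ∑ j, ⟪μ (e n i) (e n j), ν (e n i) (e n j)⟫_ℂ

lemma e_eq_basis (n : ℕ) (i : Fin n) : e n i = EuclideanSpace.basisFun (Fin n) ℂ i := by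
  simp [e]

lemma eq_zero_of_pairing_self {n : ℕ} (μ : Vb n) (h : pairing μ μ = 0) : μ = 0 := by
  have h1 : ∑ i, ∑ j, ‖μ (e n i) (e n j)‖ ^ 2 = (0 : ℝ) := by
    have h2 : ((∑ i, ∑ j, ‖μ (e n i) (e n j)‖ ^ 2 : ℝ) : ℂ) = 0 := by
      rw [← h, pairing]
      push_cast
      simp only [inner_self_eq_norm_sq_to_K]
      rfl
    exact_mod_cast h2
  have h3 : ∀ i j, μ (e n i) (e n j) = 0 := by
    intro i j
    rw [Finset.sum_eq_zero_iff_of_nonneg fun _ _ => by positivity] at h1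
    have h4 := h1 i (Finset.mem_univ i)
    rw [Finset.sum_eq_zero_iff_of_nonneg fun _ _ => by positivity] at h4
    simpa using h4 j (Finset.mem_univ j)
  refine (EuclideanSpace.basisFun (Fin n) ℂ).toBasis.ext fun i =>
    (EuclideanSpace.basisFun (Fin n) ℂ).toBasis.ext fun j => ?_
  simpa [e] using h3 i j

lemma trace_eq_sum {n : ℕ} (A : E n →ₗ[ℂ] E n) :
    LinearMap.trace ℂ (E n) A = ∑ i, ⟪e n i, A (e n i)⟫_ℂ := by
  simp only [e_eq_basis]
  exact LinearMap.trace_eq_sum_inner A (EuclideanSpace.basisFun (Fin n) ℂ)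

lemma sum_inner_eq_trace {n : ℕ} (F G : E n →ₗ[ℂ] E n) :
    ∑ i, ⟪F (e n i), G (e n i)⟫_ℂ = LinearMap.trace ℂ (E n) (adjoint F ∘ₗ G) := by
  simp [trace_eq_sum, LinearMap.adjoint_inner_right]

/-- In the sum `∑ᵢ ⟪F eᵢ, G eᵢ⟫`, an operator precomposed with `G` moves to `F` as its adjoint. -/
lemma sum_inner_comp {n : ℕ} (F G T : E n →ₗ[ℂ] E n) :
    ∑ i, ⟪F (e n i), G (T (e n i))⟫_ℂ = ∑ i, ⟪F (adjoint T (e n i)), G (e n i)⟫_ℂ := by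
  have h1 := sum_inner_eq_trace F (G ∘ₗ T)
  have h2 := sum_inner_eq_trace (F ∘ₗ adjoint T) G
  simp only [LinearMap.comp_apply] at h1 h2
  rw [h1, h2, LinearMap.adjoint_comp, LinearMap.adjoint_adjoint, ← LinearMap.comp_assoc,
    LinearMap.comp_assoc _ _ T]
  exact LinearMap.trace_mul_comm ℂ (adjoint F ∘ₗ G) T

lemma pairing_act {n : ℕ} (T : E n →ₗ[ℂ] E n) (μ ν : Vb n) :
    pairing μ (act T ν) = pairing (act (adjoint T) μ) ν := by
  simp only [pairing, act_apply, inner_sub_left, inner_sub_right, Finset.sum_sub_distrib]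
  congr 1
  · congr 1
    · simp only [LinearMap.adjoint_inner_left]
    · conv_lhs => rw [Finset.sum_comm]
      conv_rhs => rw [Finset.sum_comm]
      refine Finset.sum_congr rfl fun j _ => ?_
      exact sum_inner_comp (μ.flip (e n j)) (ν.flip (e n j)) T
  · refine Finset.sum_congr rfl fun i _ => ?_
    exact sum_inner_comp (μ (e n i)) (ν (e n i)) T

/-- `M_μ` is the moment map of the action of `End(ℂⁿ)` on bilinear maps. -/
lemma trace_Mmap_comp {n : ℕ} (μ : Vb n) (A : E n →ₗ[ℂ] E n) :
    LinearMap.trace ℂ (E n) (Mmap μ ∘ₗ A) = 2 * pairing μ (act A μ) := by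
  have h1 : ∑ i, ∑ j, ⟪μ (e n i) (e n j), A (μ (e n i) (e n j))⟫_ℂ =
      ∑ i, LinearMap.trace ℂ (E n) ((Lop μ (e n i) ∘ₗ adjoint (Lop μ (e n i))) ∘ₗ A) := by
    refine Finset.sum_congr rfl fun i _ => ?_
    have h := sum_inner_eq_trace (Lop μ (e n i)) (A ∘ₗ Lop μ (e n i))
    simp only [LinearMap.comp_apply] at h
    rw [LinearMap.comp_assoc, ← LinearMap.trace_comp_comm', LinearMap.comp_assoc]
    exact h
  have h2 : ∑ i, ∑ j, ⟪μ (e n i) (e n j), μ (e n i) (A (e n j))⟫_ℂ =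
      ∑ i, LinearMap.trace ℂ (E n) ((adjoint (Lop μ (e n i)) ∘ₗ Lop μ (e n i)) ∘ₗ A) := by
    refine Finset.sum_congr rfl fun i _ => ?_
    exact sum_inner_eq_trace (Lop μ (e n i)) (Lop μ (e n i) ∘ₗ A)
  have h3 : ∑ i, ∑ j, ⟪μ (e n i) (e n j), μ (A (e n i)) (e n j)⟫_ℂ =
      ∑ i, LinearMap.trace ℂ (E n) ((adjoint (Rop μ (e n i)) ∘ₗ Rop μ (e n i)) ∘ₗ A) := by
    rw [Finset.sum_comm]
    refine Finset.sum_congr rfl fun i _ => ?_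
    exact sum_inner_eq_trace (Rop μ (e n i)) (Rop μ (e n i) ∘ₗ A)
  have hsum : ∀ F : Fin n → E n →ₗ[ℂ] E n, (∑ i, F i) ∘ₗ A = ∑ i, F i ∘ₗ A := fun F =>
    Finset.sum_mul Finset.univ F A
  simp only [pairing, act_apply, inner_sub_right, Finset.sum_sub_distrib, h1, h2, h3, Mmap,
    LinearMap.sub_comp, LinearMap.smul_comp, hsum, map_sub, map_smul, map_sum,
    smul_eq_mul]
  ring

lemma adjoint_isDer_of_commute {n : ℕ} (μ : Vb n) (c : ℂ) (D T : E n →ₗ[ℂ] E n)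
    (hM : Mmap μ = c • (LinearMap.id : E n →ₗ[ℂ] E n) + D)
    (hT : IsDer μ T) (hDT : D ∘ₗ T = T ∘ₗ D) : IsDer μ (adjoint T) := by
  rw [isDer_iff_act] at hT ⊢
  have hzero : LinearMap.trace ℂ (E n) (Mmap μ ∘ₗ (T ∘ₗ adjoint T - adjoint T ∘ₗ T)) = 0 := by
    have h1 : LinearMap.trace ℂ (E n) (D ∘ₗ adjoint T ∘ₗ T) =
        LinearMap.trace ℂ (E n) (D ∘ₗ T ∘ₗ adjoint T) := by
      rw [← LinearMap.comp_assoc, LinearMap.trace_comp_comm', ← LinearMap.comp_assoc,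
        ← LinearMap.comp_assoc, hDT]
    have h2 : LinearMap.trace ℂ (E n) (adjoint T ∘ₗ T) =
        LinearMap.trace ℂ (E n) (T ∘ₗ adjoint T) := LinearMap.trace_comp_comm' _ _
    rw [hM]
    simp only [LinearMap.add_comp, LinearMap.comp_sub, LinearMap.smul_comp, LinearMap.id_comp,
      map_add, map_sub, map_smul, h1, h2]
    simp
  have hpos : pairing (act (adjoint T) μ) (act (adjoint T) μ) = 0 := by
    rw [trace_Mmap_comp, act_commutator, hT] at hzero
    have h3 : act (adjoint T) (0 : Vb n) = 0 := by
      refine LinearMap.ext fun X => LinearMap.ext fun Y => ?_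
      simp [act_apply]
    rw [h3, sub_zero, pairing_act] at hzero
    simpa using hzero
  exact eq_zero_of_pairing_self _ hpos

/-- If `0 ≠ μ` is a symmetric Leibniz structure with `M_μ = c·I + D`, `D ∈ Der(μ)`,
then for every `A ∈ ker D` the adjoints `(L^μ_A)*` and `(R^μ_A)*` are derivations of `μ`. -/
theorem kerD_adjoint_der {n : ℕ} (μ : Vb n) (hμ : μ ≠ 0)
    (hsym : IsSymLeibniz μ)
    (c : ℝ) (D : E n →ₗ[ℂ] E n) (hDer : IsDer μ D)
    (hM : Mmap μ = (c : ℂ) • (LinearMap.id : E n →ₗ[ℂ] E n) + D) :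
    ∀ A ∈ LinearMap.ker D,
      IsDer μ (adjoint (Lop μ A)) ∧ IsDer μ (adjoint (Rop μ A)) := by
  intro A hA
  rw [LinearMap.mem_ker] at hA
  refine ⟨adjoint_isDer_of_commute μ c D _ hM (fun X Y => hsym.1 A X Y) ?_,
    adjoint_isDer_of_commute μ c D _ hM (fun X Y => hsym.2 X Y A) ?_⟩
  · refine LinearMap.ext fun X => ?_
    simp [Lop, hDer A X, hA]
  · refine LinearMap.ext fun X => ?_
    simp [Rop, hDer X A, hA]
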